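/- arXiv:2601.01133 — 2 statements merged into one kernel-verified Lean document; each statement's English description precedes it below -/
import Mathlib

section
/- Let G be a finite nilpotent group such that the difference graph D(G) has at least one vertex. Then the domination number of D(G) equals 1 if and only if G is isomorphic to Z_2 × Q, where Q is a finite group of exponent q for some odd prime q. -/
/-- Adjacency in the difference of the enhanced power graph and the power graph:
`⟨x, y⟩` is cyclic but neither of `x`, `y` is a power of the other. -/
def diffAdj {G : Type*} [Group G] (x y : G) : Prop :=
  IsCyclic (Subgroup.closure ({x, y} : Set G)) ∧
    (¬ ∃ k : ℤ, y = x ^ k) ∧ (¬ ∃ k : ℤ, x = y ^ k)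

/-- The vertex set of the difference graph `𝒟(G)`: the elements of `G` that are
non-isolated in the difference of the enhanced power graph and the power graph. -/
abbrev DiffVertex (G : Type*) [Group G] := {x : G // ∃ y, diffAdj x y}

/-- The difference graph `𝒟(G)` of a group `G`. -/
def diffGraph (G : Type*) [Group G] : SimpleGraph (DiffVertex G) :=
  SimpleGraph.fromRel (fun a b => diffAdj a.val b.val)

/-- A dominating set of a graph: every vertex is in `S` or adjacent to a vertex of `S`. -/
def IsDominatingSet {V : Type*} (Γ : SimpleGraph V) (S : Set V) : Prop :=
  ∀ v : V, v ∈ S ∨ ∃ u ∈ S, Γ.Adj u v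

/-- The domination number of a graph: the least size of a dominating set. -/
noncomputable def dominationNumber {V : Type*} (Γ : SimpleGraph V) : ℕ :=
  sInf {n : ℕ | ∃ S : Set V, IsDominatingSet Γ S ∧ S.ncard = n}

/-- A maximal cyclic subgroup: a cyclic subgroup not properly contained in
another cyclic subgroup. -/
def IsMaxCyclic {G : Type*} [Group G] (C : Subgroup G) : Prop :=
  IsCyclic C ∧ ∀ D : Subgroup G, IsCyclic D → C ≤ D → C = D

/-! Inside a finite cyclic group, `y` is a power of `x` iff `orderOf y ∣ orderOf x`; hence `x` and
`y` are adjacent in the difference graph iff they generate a cyclic group and their orders are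
incomparable under divisibility. So a vertex `u` adjacent to all others is the only vertex whose
order is a multiple of its own. Since `u⁻¹` is such a vertex, `u` is an involution, and it is the
only vertex of even order.

A finite nilpotent group has an element whose order is the exponent `n`, so two incomparable
divisors of `n` are the orders of two adjacent vertices, and an even one among them must be `2`.
Testing this on the divisors of `n` leaves only `n = 2 * q` with `q` an odd prime. Every involution
commutes with an element of order `q`, hence is a vertex, hence is `u`. Conversely, if `n = 2 * q`
and there is a unique involution `a`, then every vertex other than `a` has order `q`.

A unique involution `a` is central, and if the exponent is `2 * m` with `m` odd, then `⟨a⟩` has odd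
index, so by Schur–Zassenhaus it has a complement, which makes it a direct factor. -/

section DominationNumber

theorem dominationNumber_eq_one_iff {V : Type*} [Finite V] (Γ : SimpleGraph V) :
    dominationNumber Γ = 1 ↔ ∃ v, Γ.IsUniversal v := by
  constructor
  · intro h
    have hpos : 0 < dominationNumber Γ := h ▸ one_pos
    obtain ⟨S, hS, hcard⟩ : dominationNumber Γ ∈
        {n : ℕ | ∃ S : Set V, IsDominatingSet Γ S ∧ S.ncard = n} :=
      Nat.sInf_mem (Nat.nonempty_of_pos_sInf hpos)
    obtain ⟨v, rfl⟩ := Set.ncard_eq_one.1 (hcard.trans h)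
    exact ⟨v, fun w hvw => by simpa [hvw.symm] using hS w⟩
  · rintro ⟨v, hv⟩
    have hsingleton : IsDominatingSet Γ {v} := fun w =>
      (eq_or_ne v w).imp Eq.symm fun hvw => ⟨v, rfl, hv hvw⟩
    have hle : dominationNumber Γ ≤ 1 := Nat.sInf_le ⟨{v}, hsingleton, Set.ncard_singleton v⟩
    refine le_antisymm hle (le_csInf ⟨1, {v}, hsingleton, Set.ncard_singleton v⟩ ?_)
    rintro n ⟨S, hS, rfl⟩
    have hSne : S.Nonempty := (hS v).elim (fun h => ⟨v, h⟩) fun ⟨u, hu, _⟩ => ⟨u, hu⟩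
    exact (Set.ncard_pos).2 hSne

end DominationNumber

section DiffAdj

variable {G : Type*} [Group G]

theorem mem_zpowers_iff_orderOf_dvd [Finite G] [IsCyclic G] {x y : G} :
    y ∈ Subgroup.zpowers x ↔ orderOf y ∣ orderOf x := by
  classical
  refine ⟨orderOf_dvd_of_mem_zpowers, fun hdvd => ?_⟩
  have := Fintype.ofFinite G
  let roots : Finset G := {z | z ^ orderOf x = 1}
  have hsub : (Subgroup.zpowers x : Set G).toFinset ⊆ roots := fun z hz => by
    have hzx : z ∈ Subgroup.zpowers x := by simpa using hz
    simpa [roots] using orderOf_dvd_iff_pow_eq_one.1 (orderOf_dvd_of_mem_zpowers hzx)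
  have hcard : roots.card ≤ (Subgroup.zpowers x : Set G).toFinset.card := by
    rw [Set.toFinset_card, ← Nat.card_eq_fintype_card]
    exact (IsCyclic.card_pow_eq_one_le (orderOf_pos x)).trans_eq (Nat.card_zpowers x).symm
  have hy : y ∈ roots := by simpa [roots] using orderOf_dvd_iff_pow_eq_one.1 hdvd
  rw [← Finset.eq_of_subset_of_card_le hsub hcard] at hy
  simpa using hy

theorem isCyclic_closure_pair {g x y : G} (hx : x ∈ Subgroup.zpowers g)
    (hy : y ∈ Subgroup.zpowers g) : IsCyclic (Subgroup.closure ({x, y} : Set G)) :=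
  Subgroup.isCyclic_of_le ((Subgroup.closure_le _).2 (Set.pair_subset hx hy))

theorem diffAdj_iff [Finite G] {x y : G} :
    diffAdj x y ↔ IsCyclic (Subgroup.closure ({x, y} : Set G)) ∧
      ¬ orderOf y ∣ orderOf x ∧ ¬ orderOf x ∣ orderOf y := by
  refine and_congr_right fun _ => ?_
  let x' : Subgroup.closure ({x, y} : Set G) := ⟨x, Subgroup.subset_closure (by simp)⟩
  let y' : Subgroup.closure ({x, y} : Set G) := ⟨y, Subgroup.subset_closure (by simp)⟩
  have hyx : y' ∈ Subgroup.zpowers x' ↔ orderOf y ∣ orderOf x := by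
    rw [mem_zpowers_iff_orderOf_dvd, Subgroup.orderOf_mk, Subgroup.orderOf_mk]
  have hxy : x' ∈ Subgroup.zpowers y' ↔ orderOf x ∣ orderOf y := by
    rw [mem_zpowers_iff_orderOf_dvd, Subgroup.orderOf_mk, Subgroup.orderOf_mk]
  simp only [← hyx, ← hxy, Subgroup.mem_zpowers_iff, Subtype.ext_iff, SubgroupClass.coe_zpow,
    x', y', eq_comm]

theorem diffAdj_comm {x y : G} : diffAdj x y ↔ diffAdj y x := by
  rw [diffAdj, diffAdj, Set.pair_comm, and_comm (a := ¬ ∃ k : ℤ, y = x ^ k)]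

theorem diffGraph_adj {u v : DiffVertex G} : (diffGraph G).Adj u v ↔ diffAdj u.1 v.1 := by
  rw [diffGraph, SimpleGraph.fromRel_adj, diffAdj_comm (x := v.1), or_self]
  exact and_iff_right_of_imp fun h huv => h.2.1 ⟨1, by rw [huv, zpow_one]⟩

theorem exists_diffAdj_pow [Finite G] {g : G} {d e : ℕ} (hd : d ∣ orderOf g) (he : e ∣ orderOf g)
    (hde : ¬ d ∣ e) (hed : ¬ e ∣ d) : ∃ x y : G, orderOf x = d ∧ diffAdj x y := by
  have hpow {n : ℕ} (hn : n ∣ orderOf g) : orderOf (g ^ (orderOf g / n)) = n :=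
    orderOf_pow_orderOf_div (orderOf_pos g).ne' hn
  refine ⟨g ^ (orderOf g / d), g ^ (orderOf g / e), hpow hd, diffAdj_iff.2
    ⟨isCyclic_closure_pair (Subgroup.npow_mem_zpowers g _) (Subgroup.npow_mem_zpowers g _), ?_⟩⟩
  rw [hpow hd, hpow he]
  exact ⟨hed, hde⟩

theorem mem_zpowers_mul_of_coprime {x y : G} (hxy : Commute x y)
    (hcop : (orderOf x).Coprime (orderOf y)) : x ∈ Subgroup.zpowers (x * y) := by
  have hpow : (x * y) ^ orderOf y = x ^ orderOf y := by
    rw [hxy.mul_pow, pow_orderOf_eq_one, mul_one]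
  have hx : x ∈ Subgroup.zpowers (x ^ orderOf y) := mem_zpowers_pow_iff.2 hcop.symm
  rw [← hpow] at hx
  exact Subgroup.zpowers_le.2 (Subgroup.npow_mem_zpowers _ _) hx

theorem diffAdj_of_coprime [Finite G] {x y : G} (hxy : Commute x y)
    (hcop : (orderOf x).Coprime (orderOf y)) (hx : orderOf x ≠ 1) (hy : orderOf y ≠ 1) :
    diffAdj x y := by
  have hy_mem : y ∈ Subgroup.zpowers (x * y) :=
    hxy.eq ▸ mem_zpowers_mul_of_coprime hxy.symm hcop.symm
  refine diffAdj_iff.2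
    ⟨isCyclic_closure_pair (mem_zpowers_mul_of_coprime hxy hcop) hy_mem, fun h => ?_, fun h => ?_⟩
  · exact hy (Nat.eq_one_of_dvd_coprimes hcop h dvd_rfl)
  · exact hx (Nat.eq_one_of_dvd_coprimes hcop dvd_rfl h)

end DiffAdj

section Nilpotent

variable {G : Type*} [Group G] [Finite G] [Group.IsNilpotent G]

theorem commute_of_orderOf_eq_prime_pow {p q i j : ℕ} (hp : p.Prime) (hq : q.Prime) (hpq : p ≠ q)
    {x y : G} (hx : orderOf x = p ^ i) (hy : orderOf y = q ^ j) : Commute x y := by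
  have := Fact.mk hp
  have := Fact.mk hq
  have hxp : IsPGroup p (Subgroup.zpowers x) := .of_card ((Nat.card_zpowers x).trans hx)
  have hyq : IsPGroup q (Subgroup.zpowers y) := .of_card ((Nat.card_zpowers y).trans hy)
  obtain ⟨P, hP⟩ := hxp.exists_le_sylow
  obtain ⟨Q, hQ⟩ := hyq.exists_le_sylow
  exact Subgroup.commute_of_normal_of_disjoint _ _ inferInstance inferInstance
    (IsPGroup.disjoint_of_ne p q hpq _ _ P.isPGroup' Q.isPGroup') x y
    (hP (Subgroup.mem_zpowers x)) (hQ (Subgroup.mem_zpowers y))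

open scoped IsMulCommutative in
variable (G) in
theorem exists_orderOf_eq_exponent_of_isNilpotent : ∃ g : G, orderOf g = Monoid.exponent G := by
  choose! g hg using fun (p : ℕ) (hp : p.Prime) =>
    hp.exists_orderOf_eq_pow_factorization_exponent G
  let H := Subgroup.closure (g '' {p | p.Prime})
  have : IsMulCommutative H := Subgroup.isMulCommutative_closure <| by
    rintro _ ⟨p, hp, rfl⟩ _ ⟨q, hq, rfl⟩
    obtain rfl | hpq := eq_or_ne p q
    · rfl
    · exact commute_of_orderOf_eq_prime_pow hp hq hpq (hg p hp) (hg q hq)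
  have hexp : Monoid.exponent G ∣ Monoid.exponent H := by
    refine (Nat.dvd_iff_prime_pow_dvd_dvd _ _).2 fun p k hp hk => ?_
    have hmem : g p ∈ H := Subgroup.subset_closure ⟨p, hp, rfl⟩
    have hgp : p ^ (Monoid.exponent G).factorization p ∣ Monoid.exponent H := by
      rw [← hg p hp, ← Subgroup.orderOf_mk (g p) hmem]
      exact Monoid.order_dvd_exponent _
    exact (pow_dvd_pow p ((hp.pow_dvd_iff_le_factorization
      Monoid.exponent_ne_zero_of_finite).1 hk)).trans hgp
  obtain ⟨h, hh⟩ := Monoid.exists_orderOf_eq_exponent (G := H) .of_finite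
  refine ⟨h, Nat.dvd_antisymm (Monoid.order_dvd_exponent _) ?_⟩
  rwa [Subgroup.orderOf_coe, hh]

end Nilpotent

section UniqueInvolution

variable {G : Type*} [Group G]

theorem commute_of_unique_involution {a : G} (ha : orderOf a = 2)
    (huniq : ∀ b : G, orderOf b = 2 → b = a) (x : G) : Commute a x := by
  have hconj : orderOf (MulAut.conj x a) = 2 := (MulEquiv.orderOf_eq _ a).trans ha
  exact (mul_inv_eq_iff_eq_mul.1 (huniq _ hconj)).symm

/-- The internal direct product decomposition attached to two commuting complements. -/
noncomputable def prodMulEquivOfIsComplement' {H K : Subgroup G} (hHK : H.IsComplement' K)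
    (hcomm : ∀ (h : H) (k : K), Commute (h : G) k) : H × K ≃* G :=
  MulEquiv.ofBijective (MonoidHom.noncommCoprod H.subtype K.subtype hcomm) hHK

theorem odd_card_of_forall_pow_eq_one [Finite G] {m : ℕ} (hm : Odd m) (hpow : ∀ x : G, x ^ m = 1) :
    Odd (Nat.card G) := by
  by_contra heven
  obtain ⟨x, hx⟩ := exists_prime_orderOf_dvd_card' (G := G) 2
    (even_iff_two_dvd.1 (Nat.not_odd_iff_even.1 heven))
  exact hm.not_two_dvd_nat (hx ▸ orderOf_dvd_of_pow_eq_one (hpow x))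

theorem odd_index_zpowers_of_exponent_eq_two_mul [Finite G] {m : ℕ} (hm : Odd m)
    (hexp : Monoid.exponent G = 2 * m) {a : G} (huniq : ∀ b : G, orderOf b = 2 → b = a)
    [(Subgroup.zpowers a).Normal] : Odd (Subgroup.zpowers a).index := by
  refine odd_card_of_forall_pow_eq_one hm fun x => ?_
  induction x using QuotientGroup.induction_on with | H g => ?_
  rw [← QuotientGroup.mk_pow, QuotientGroup.eq_one_iff]
  have hsq : (g ^ m) ^ 2 = 1 := by
    rw [← pow_mul, mul_comm, ← hexp, Monoid.pow_exponent_eq_one]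
  by_cases hgm : g ^ m = 1
  · rw [hgm]
    exact one_mem _
  · rw [huniq _ (orderOf_eq_prime hsq hgm)]
    exact Subgroup.mem_zpowers a

theorem exponent_zmod_two_prod {Q : Type*} [Group Q] (hQ : Odd (Monoid.exponent Q)) :
    Monoid.exponent (Multiplicative (ZMod 2) × Q) = 2 * Monoid.exponent Q := by
  rw [Monoid.exponent_prod, Monoid.exponent_multiplicative, ZMod.exponent]
  exact (Nat.coprime_two_left.2 hQ).lcm_eq_mul

theorem existsUnique_involution_zmod_two_prod {Q : Type*} [Group Q]
    (hQ : Odd (Monoid.exponent Q)) :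
    ∃! x : Multiplicative (ZMod 2) × Q, orderOf x = 2 := by
  have hfst (s : Multiplicative (ZMod 2)) : orderOf s = 2 ↔ s = .ofAdd 1 := by
    rw [orderOf_eq_prime_iff]
    revert s
    decide
  refine ⟨(.ofAdd 1, 1), ?_, ?_⟩
  · simp [Prod.orderOf, (hfst _).2 rfl]
  · rintro ⟨s, y⟩ (hsy : orderOf (s, y) = 2)
    rw [Prod.orderOf] at hsy
    have hy : orderOf y = 1 := Nat.eq_one_of_dvd_coprimes (Nat.coprime_two_left.2 hQ)
      (hsy ▸ Nat.dvd_lcm_right _ _) (Monoid.order_dvd_exponent y)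
    rw [hy, Nat.lcm_one_right, hfst] at hsy
    exact Prod.ext hsy (orderOf_eq_one_iff.1 hy)

theorem exponent_eq_two_mul_and_existsUnique_involution_iff {G : Type u} [Group G] [Finite G]
    {m : ℕ} (hm : Odd m) :
    (Monoid.exponent G = 2 * m ∧ ∃! a : G, orderOf a = 2) ↔
      ∃ (Q : Type u) (_ : Group Q) (_ : Finite Q),
        Monoid.exponent Q = m ∧ Nonempty (G ≃* (Multiplicative (ZMod 2) × Q)) := by
  constructor
  · rintro ⟨hexp, a, ha, huniq⟩
    have hcomm := commute_of_unique_involution ha huniq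
    have hnormal : (Subgroup.zpowers a).Normal := by
      refine ⟨fun z hz g => ?_⟩
      obtain ⟨n, rfl⟩ := Subgroup.mem_zpowers_iff.1 hz
      rwa [← ((hcomm g).zpow_left n).eq, mul_inv_cancel_right]
    have hcard : Nat.card (Subgroup.zpowers a) = 2 := (Nat.card_zpowers a).trans ha
    have hindex := odd_index_zpowers_of_exponent_eq_two_mul hm hexp huniq
    obtain ⟨K, hK⟩ := Subgroup.exists_right_complement'_of_coprime
      (N := Subgroup.zpowers a) (hcard ▸ Nat.coprime_two_left.2 hindex)
    have hKodd : Odd (Monoid.exponent K) := by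
      rw [hK.symm.index_eq_card] at hindex
      exact hindex.of_dvd_nat Group.exponent_dvd_nat_card
    let eZMod : Subgroup.zpowers a ≃* Multiplicative (ZMod 2) :=
      have : Fact (Nat.Prime 2) := ⟨Nat.prime_two⟩
      mulEquivOfPrimeCardEq hcard (by simp)
    let eProd : Subgroup.zpowers a × K ≃* G := prodMulEquivOfIsComplement' hK <| by
      rintro ⟨_, n, rfl⟩ k
      exact (hcomm k).zpow_left n
    let e : G ≃* Multiplicative (ZMod 2) × K := eProd.symm.trans (eZMod.prodCongr (.refl K))
    refine ⟨K, inferInstance, inferInstance, ?_, ⟨e⟩⟩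
    rw [Monoid.exponent_eq_of_mulEquiv e, exponent_zmod_two_prod hKodd] at hexp
    exact Nat.eq_of_mul_eq_mul_left two_pos hexp
  · rintro ⟨Q, _, _, rfl, ⟨e⟩⟩
    refine ⟨(Monoid.exponent_eq_of_mulEquiv e).trans (exponent_zmod_two_prod hm), ?_⟩
    exact (e.toEquiv.existsUnique_congr fun x => by
      rw [MulEquiv.toEquiv_eq_coe, EquivLike.coe_coe, e.orderOf_eq]).2
      (existsUnique_involution_zmod_two_prod hm)

end UniqueInvolution

theorem exists_odd_prime_eq_two_mul {n : ℕ} (hn : n ≠ 0) (htwo : 2 ∣ n) (hpow : ∀ k, n ≠ 2 ^ k)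
    (hdvd : ∀ d e, d ∣ n → e ∣ n → ¬ d ∣ e → ¬ e ∣ d → 2 ∣ d → d = 2) :
    ∃ q, q.Prime ∧ Odd q ∧ n = 2 * q := by
  obtain ⟨k, m, hm, rfl⟩ := Nat.exists_eq_two_pow_mul_odd hn
  have hm_one : m ≠ 1 := by
    rintro rfl
    exact hpow k (mul_one _)
  have hk : k ≠ 0 := by
    rintro rfl
    exact hm.not_two_dvd_nat (by simpa using htwo)
  obtain ⟨q, hq, hqm⟩ := Nat.exists_prime_and_dvd hm_one
  have hqodd : Odd q := hm.of_dvd_nat hqm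
  have hmq : m = q := by
    have hm_dvd : m ∣ 2 * q := by
      by_contra hm_dvd
      have := hdvd (2 * q) m (mul_dvd_mul (dvd_pow_self 2 hk) hqm) (dvd_mul_left m _)
        (fun h => hm.not_two_dvd_nat ((dvd_mul_right 2 q).trans h)) hm_dvd (dvd_mul_right 2 q)
      exact hq.ne_one (by omega)
    exact Nat.dvd_antisymm ((Nat.coprime_two_right.2 hm).dvd_of_dvd_mul_left hm_dvd) hqm
  subst hmq
  have hcop : Nat.Coprime (2 ^ k) m := (Nat.coprime_two_left.2 hm).pow_left k
  have htwo_pow : 2 ^ k = 2 := hdvd (2 ^ k) m (dvd_mul_right _ _) (dvd_mul_left _ _)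
    (fun h => hm.not_two_dvd_nat ((dvd_pow_self 2 hk).trans h))
    (fun h => hq.ne_one (Nat.eq_one_of_dvd_coprimes hcop h dvd_rfl)) (dvd_pow_self 2 hk)
  exact ⟨m, hq, hm, by rw [htwo_pow]⟩

section UniversalVertex

variable {G : Type*} [Group G] [Finite G]

theorem eq_of_isUniversal_of_orderOf_dvd {u v : DiffVertex G} (hu : (diffGraph G).IsUniversal u)
    (h : orderOf u.1 ∣ orderOf v.1) : v = u := by
  by_contra hne
  exact (diffAdj_iff.1 (diffGraph_adj.1 (hu (Ne.symm hne)))).2.2 h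

theorem orderOf_eq_two_of_isUniversal {u : DiffVertex G} (hu : (diffGraph G).IsUniversal u) :
    orderOf u.1 = 2 := by
  obtain ⟨y, hy⟩ := u.2
  have hinv : diffAdj u.1⁻¹ y := by
    obtain ⟨hcyc, hdvd⟩ := diffAdj_iff.1 hy
    refine diffAdj_iff.2 ⟨?_, by rwa [orderOf_inv]⟩
    obtain ⟨g, hg⟩ := (Subgroup.isCyclic_iff_exists_zpowers_eq_top _).1 hcyc
    have hmem (z : G) (hz : z ∈ ({u.1, y} : Set G)) : z ∈ Subgroup.zpowers g :=
      hg ▸ Subgroup.subset_closure hz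
    exact isCyclic_closure_pair (inv_mem (hmem u.1 (by simp))) (hmem y (by simp))
  have hinv_eq : u.1⁻¹ = u.1 := congrArg Subtype.val
    (eq_of_isUniversal_of_orderOf_dvd (v := ⟨u.1⁻¹, y, hinv⟩) hu (orderOf_inv u.1).symm.dvd)
  refine orderOf_eq_prime (by rw [pow_two, mul_eq_one_iff_inv_eq, hinv_eq]) fun hone => ?_
  exact (diffAdj_iff.1 hy).2.2 (by rw [hone, orderOf_one]; exact one_dvd _)

theorem exists_exponent_eq_two_mul_of_isUniversal [Group.IsNilpotent G] {u : DiffVertex G}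
    (hu : (diffGraph G).IsUniversal u) :
    ∃ q, q.Prime ∧ Odd q ∧ Monoid.exponent G = 2 * q := by
  have hu_two := orderOf_eq_two_of_isUniversal hu
  obtain ⟨g, hg⟩ := exists_orderOf_eq_exponent_of_isNilpotent G
  refine exists_odd_prime_eq_two_mul Monoid.exponent_ne_zero_of_finite
    (hu_two ▸ Monoid.order_dvd_exponent u.1) (fun k hk => ?_) fun d e hd he hde hed hd_even => ?_
  · obtain ⟨y, hy⟩ := u.2
    obtain ⟨-, hyu, huy⟩ := diffAdj_iff.1 hy
    obtain ⟨j, -, hj⟩ := (Nat.dvd_prime_pow Nat.prime_two).1 (hk ▸ Monoid.order_dvd_exponent y)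
    rw [hu_two, hj] at hyu huy
    rcases j with _ | j
    · exact hyu (one_dvd 2)
    · exact huy (dvd_pow_self 2 j.succ_ne_zero)
  · rw [← hg] at hd he
    obtain ⟨x, y, rfl, hxy⟩ := exists_diffAdj_pow hd he hde hed
    have hxu : x = u.1 := congrArg Subtype.val
      (eq_of_isUniversal_of_orderOf_dvd (v := ⟨x, y, hxy⟩) hu (hu_two.symm ▸ hd_even))
    rw [hxu, hu_two]

theorem eq_of_isUniversal_of_orderOf_eq_two [Group.IsNilpotent G] {u : DiffVertex G}
    (hu : (diffGraph G).IsUniversal u) {b : G} (hb : orderOf b = 2) : b = u.1 := by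
  obtain ⟨q, hq, hqodd, hexp⟩ := exists_exponent_eq_two_mul_of_isUniversal hu
  have := Fact.mk hq
  obtain ⟨c, hc⟩ := exists_prime_orderOf_dvd_card' (G := G) q
    ((Dvd.intro_left 2 hexp.symm).trans Group.exponent_dvd_nat_card)
  have hcop : Nat.Coprime 2 q := Nat.coprime_two_left.2 hqodd
  have hbc : Commute b c := commute_of_orderOf_eq_prime_pow Nat.prime_two hq
    (fun h => Nat.not_odd_iff_even.2 even_two (h ▸ hqodd))
    (hb.trans (pow_one 2).symm) (hc.trans (pow_one q).symm)
  have hadj : diffAdj b c := diffAdj_of_coprime hbc (by rwa [hb, hc])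
    (hb.trans_ne Nat.prime_two.ne_one) (hc.trans_ne hq.ne_one)
  exact congrArg Subtype.val (eq_of_isUniversal_of_orderOf_dvd (v := ⟨b, c, hadj⟩) hu
    ((orderOf_eq_two_of_isUniversal hu).trans hb.symm).dvd)

theorem exists_isUniversal_of_exponent_eq_two_mul {q : ℕ} (hq : q.Prime) (hodd : Odd q)
    (hexp : Monoid.exponent G = 2 * q) (hinv : ∃! a : G, orderOf a = 2) :
    ∃ u, (diffGraph G).IsUniversal u := by
  obtain ⟨a, ha, huniq⟩ := hinv
  have hadj {x : G} (hx : Odd (orderOf x)) (hx_one : orderOf x ≠ 1) : diffAdj a x :=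
    diffAdj_of_coprime (commute_of_unique_involution ha huniq x)
      (ha.symm ▸ Nat.coprime_two_left.2 hx) (ha.trans_ne Nat.prime_two.ne_one) hx_one
  have := Fact.mk hq
  obtain ⟨c, hc⟩ := exists_prime_orderOf_dvd_card' (G := G) q
    ((Dvd.intro_left 2 hexp.symm).trans Group.exponent_dvd_nat_card)
  refine ⟨⟨a, c, hadj (hc ▸ hodd) (hc.trans_ne hq.ne_one)⟩, ?_⟩
  rintro ⟨v, y, hvy⟩ hne
  have hva : v ≠ a := fun h => hne (Subtype.ext h.symm)
  obtain ⟨-, hyv, hvy⟩ := diffAdj_iff.1 hvy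
  refine diffGraph_adj.2 (hadj ?_ fun h => hvy (h ▸ one_dvd _))
  by_contra heven
  obtain ⟨k, hk⟩ := even_iff_two_dvd.1 (Nat.not_odd_iff_even.1 heven)
  have hkq : k ∣ q := Nat.dvd_of_mul_dvd_mul_left two_pos
    (hk ▸ hexp ▸ Monoid.order_dvd_exponent v)
  rcases (Nat.dvd_prime hq).1 hkq with rfl | rfl
  · exact hva (huniq v hk)
  · exact hyv (hk ▸ hexp ▸ Monoid.order_dvd_exponent y)

theorem exists_isUniversal_diffGraph_iff [Group.IsNilpotent G] :
    (∃ u, (diffGraph G).IsUniversal u) ↔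
      ∃ q, q.Prime ∧ Odd q ∧ Monoid.exponent G = 2 * q ∧ ∃! a : G, orderOf a = 2 := by
  constructor
  · rintro ⟨u, hu⟩
    obtain ⟨q, hq, hodd, hexp⟩ := exists_exponent_eq_two_mul_of_isUniversal hu
    exact ⟨q, hq, hodd, hexp, u.1, orderOf_eq_two_of_isUniversal hu,
      fun b hb => eq_of_isUniversal_of_orderOf_eq_two hu hb⟩
  · rintro ⟨q, hq, hodd, hexp, hinv⟩
    exact exists_isUniversal_of_exponent_eq_two_mul hq hodd hexp hinv

end UniversalVertex

/-- Corollary 3.4: for a finite nilpotent group `G` whose difference graph has at least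
one vertex, `γ(𝒟(G)) = 1` iff `G ≅ ℤ₂ × Q` for some finite group `Q` of exponent `q`,
where `q` is an odd prime. -/
theorem nilpotent_domination_number_eq_one_iff
    (G : Type u) [Group G] [Finite G] (hnil : Group.IsNilpotent G)
    (hne : Nonempty (DiffVertex G)) :
    dominationNumber (diffGraph G) = 1 ↔
      ∃ (q : ℕ), q.Prime ∧ Odd q ∧
        ∃ (Q : Type u) (_ : Group Q) (_ : Finite Q),
          Monoid.exponent Q = q ∧
          Nonempty (G ≃* (Multiplicative (ZMod 2) × Q)) := by
  rw [dominationNumber_eq_one_iff, exists_isUniversal_diffGraph_iff]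
  refine exists_congr fun q => and_congr_right fun _ => and_congr_right fun hodd => ?_
  exact exponent_eq_two_mul_and_existsUnique_involution_iff hodd
end

section
/- Let G be a finite non-cyclic nilpotent group whose order is not a prime power, written as G = P₁ × P₂ × ⋯ × P_t × Z_n where each P_i is a non-cyclic Sylow p_i-subgroup of G, the p_i are pairwise distinct primes, and p_i does not divide n for each i (possibly n = 1, in which case t ≥ 2). Then the set F(G) is a dominating set of the difference graph D(G). -/
/-- The domination relation on maximal cyclic subgroups of a `p`-group:
`M ≪ N` iff `p² ≤ |M| ≤ |N|` and `|M ∩ N| = |M| / p`. -/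
def SubgroupDominated {G : Type*} [Group G] (p : ℕ) (M N : Subgroup G) : Prop :=
  p ^ 2 ≤ Nat.card M ∧ Nat.card M ≤ Nat.card N ∧
    Nat.card ↥(M ⊓ N) = Nat.card M / p

/-- The set `𝒮'(P)`: maximal cyclic subgroups `C` with `|C| > p` such that no maximal
cyclic subgroup of strictly larger order dominates `C`. -/
def SPrime (p : ℕ) (P : Type*) [Group P] : Set (Subgroup P) :=
  {C | IsMaxCyclic C ∧ p < Nat.card C ∧
    ¬ ∃ C' : Subgroup P, IsMaxCyclic C' ∧ Nat.card C < Nat.card C' ∧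
      SubgroupDominated p C C'}

/-- The reflexive(-symmetric) closure `≡` of the domination relation; on `𝒮'(P)` the
domination relation is symmetric and this is an equivalence relation. -/
def PhiEquiv {P : Type*} [Group P] (p : ℕ) (C C' : Subgroup P) : Prop :=
  C = C' ∨ SubgroupDominated p C C' ∨ SubgroupDominated p C' C

/-- Admissible choices for the set `ℱ(P)` of a non-cyclic `p`-group `P`: if
`exp(P) = p`, a singleton `{x}` with `o(x) = p`; if `exp(P) > p`, a set
`{x₁, …, x_k}` such that `{⟨x₁⟩, …, ⟨x_k⟩}` is a system of representatives of the
`≡`-classes of `𝒮'(P)`. -/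
def IsAdmissibleF (p : ℕ) (P : Type*) [Group P] (F : Set P) : Prop :=
  (Monoid.exponent P = p ∧ ∃ x : P, orderOf x = p ∧ F = {x}) ∨
  (p < Monoid.exponent P ∧
    (∀ x ∈ F, Subgroup.zpowers x ∈ SPrime p P) ∧
    (∀ C ∈ SPrime p P, ∃ x ∈ F, PhiEquiv p C (Subgroup.zpowers x)) ∧
    (∀ x ∈ F, ∀ y ∈ F, PhiEquiv p (Subgroup.zpowers x) (Subgroup.zpowers y) →
      Subgroup.zpowers x = Subgroup.zpowers y))

/-!
Every vertex `g` of `𝒟(G)` generates a cyclic subgroup that is not maximal. The factors of `G` have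
pairwise coprime orders, so some component `b` of `g` generates a non-maximal cyclic subgroup of its
factor. If `⟨b⟩ < ⟨u⟩` in that factor and `g` has another non-trivial component, then `u` is adjacent
to `g`: coprimality makes `⟨u, g⟩` cyclic, the other component keeps `g` from being a power of `u`,
and strictness keeps `u` from being a power of `g`. If `g` lives in a single factor, `b` is replaced
by the trivial component of `g` in any other factor.

So `ℱ(P)` only has to contain, above every non-maximal `⟨a⟩`, some `u` with `⟨a⟩ < ⟨u⟩`. A cyclic
subgroup `C` of largest order above `⟨a⟩` lies in `𝒮'(P)`, and `≡`-equivalent members `C`, `D` of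
`𝒮'(P)` have the same order and share their subgroup of index `p`. As `C` is a cyclic `p`-group, that
subgroup contains every proper subgroup of `C`, so `⟨a⟩ < D` as well.
-/

open Subgroup

section Order

theorem coprime_orderOf_pi {ι : Type*} [Finite ι] {M : ι → Type*} [∀ i, Monoid (M i)]
    {f : ∀ i, M i} {m : ℕ} (h : ∀ i, m.Coprime (orderOf (f i))) : m.Coprime (orderOf f) := by
  have := Fintype.ofFinite ι
  rw [Pi.orderOf]
  exact (Nat.Coprime.prod_right fun i _ => h i).coprime_dvd_right (Finset.lcm_dvd_prod _ _)

theorem coprime_orderOf_prodMk {M N : Type*} [Monoid M] [Monoid N] {a : M} {b : N} {m : ℕ}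
    (ha : m.Coprime (orderOf a)) (hb : m.Coprime (orderOf b)) : m.Coprime (orderOf (a, b)) := by
  rw [Prod.orderOf_mk]
  exact (ha.mul_right hb).coprime_dvd_right (Nat.lcm_dvd_mul _ _)

theorem coprime_orderOf_of_isPGroup {G H : Type*} [Group G] [Group H] {p q : ℕ}
    (hG : IsPGroup p G) (hH : IsPGroup q H) (hpq : p.Coprime q) (a : G) (b : H) :
    (orderOf a).Coprime (orderOf b) :=
  hG.orderOf_coprime (hH.orderOf_coprime hpq.symm b).symm a

variable {G : Type*} [Group G]

theorem zpowers_lt_of_mem_of_orderOf_lt {a b : G} (hab : a ∈ zpowers b)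
    (h : orderOf a < orderOf b) : zpowers a < zpowers b := by
  refine lt_of_le_of_ne (zpowers_le.2 hab) fun heq => h.ne ?_
  rw [← Nat.card_zpowers, heq, Nat.card_zpowers]

theorem zpowers_eq_of_le_of_orderOf_le {a b : G} (hb : IsOfFinOrder b)
    (hab : zpowers a ≤ zpowers b) (h : orderOf b ≤ orderOf a) : zpowers a = zpowers b := by
  have : Finite (zpowers b) := hb.finite_zpowers
  exact eq_of_le_of_card_ge hab (by simpa only [Nat.card_zpowers] using h)

theorem orderOf_lt_of_zpowers_lt {a b : G} (hb : IsOfFinOrder b)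
    (hab : zpowers a < zpowers b) : orderOf a < orderOf b :=
  lt_of_not_ge fun h => hab.ne (zpowers_eq_of_le_of_orderOf_le hb hab.le h)

theorem zpowers_one_lt_zpowers {a : G} (ha : a ≠ 1) : zpowers (1 : G) < zpowers a := by
  rwa [zpowers_one_eq_bot, bot_lt_iff_ne_bot, zpowers_ne_bot]

end Order

section IsMaxCyclic

variable {G : Type*} [Group G]

theorem isMaxCyclic_zpowers_iff {a : G} :
    IsMaxCyclic (zpowers a) ↔ ∀ c, a ∈ zpowers c → c ∈ zpowers a := by
  refine ⟨fun h c hac => ?_, fun h => ⟨inferInstance, fun D hD hle => ?_⟩⟩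
  · exact h.2 (zpowers c) inferInstance (zpowers_le.2 hac) ▸ mem_zpowers c
  · obtain ⟨c, rfl⟩ := D.isCyclic_iff_exists_zpowers_eq_top.1 hD
    exact hle.antisymm (zpowers_le.2 (h c (hle (mem_zpowers a))))

theorem not_isMaxCyclic_zpowers_iff {a : G} :
    ¬ IsMaxCyclic (zpowers a) ↔ ∃ c, zpowers a < zpowers c := by
  simp only [isMaxCyclic_zpowers_iff, lt_iff_le_not_ge, zpowers_le]
  push Not
  rfl

theorem not_isMaxCyclic_zpowers_one [Nontrivial G] : ¬ IsMaxCyclic (zpowers (1 : G)) := by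
  obtain ⟨b, hb⟩ := exists_ne (1 : G)
  exact not_isMaxCyclic_zpowers_iff.2 ⟨b, zpowers_one_lt_zpowers hb⟩

theorem IsMaxCyclic.coprime_orderOf {c : G} {k : ℤ} (h : IsMaxCyclic (zpowers (c ^ k))) :
    k.natAbs.Coprime (orderOf c) :=
  mem_zpowers_zpow_iff.1 (isMaxCyclic_zpowers_iff.1 h c (zpow_mem_zpowers c k))

theorem isMaxCyclic_zpowers_of_coprime {a : G}
    (h : ∀ c (k : ℤ), c ^ k = a → k.natAbs.Coprime (orderOf c)) : IsMaxCyclic (zpowers a) := by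
  refine isMaxCyclic_zpowers_iff.2 fun c hac => ?_
  obtain ⟨k, rfl⟩ := mem_zpowers_iff.1 hac
  exact mem_zpowers_zpow_iff.2 (h c k rfl)

theorem isMaxCyclic_zpowers_pi {ι : Type*} [Finite ι] {P : ι → Type*} [∀ i, Group (P i)]
    {f : ∀ i, P i} (h : ∀ i, IsMaxCyclic (zpowers (f i))) : IsMaxCyclic (zpowers f) := by
  refine isMaxCyclic_zpowers_of_coprime ?_
  rintro c k rfl
  exact coprime_orderOf_pi fun i => (h i).coprime_orderOf

theorem isMaxCyclic_zpowers_prodMk {H : Type*} [Group H] {a : G} {b : H}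
    (ha : IsMaxCyclic (zpowers a)) (hb : IsMaxCyclic (zpowers b)) :
    IsMaxCyclic (zpowers (a, b)) := by
  refine isMaxCyclic_zpowers_of_coprime ?_
  rintro ⟨c, d⟩ k hk
  obtain ⟨rfl, rfl⟩ := Prod.mk.inj hk
  exact coprime_orderOf_prodMk ha.coprime_orderOf hb.coprime_orderOf

end IsMaxCyclic

section PGroup

variable {P : Type*} [Group P] {p : ℕ}

theorem prime_dvd_of_zpowers_zpow_lt (hp : p.Prime) (hP : IsPGroup p P) {c : P} {k : ℤ}
    (h : zpowers (c ^ k) < zpowers c) : (p : ℤ) ∣ k := by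
  by_contra hpk
  have hcop : (orderOf c).Coprime k.natAbs :=
    hP.orderOf_coprime (hp.coprime_iff_not_dvd.2 (mt Int.natCast_dvd.2 hpk)) c
  exact h.not_ge (zpowers_le.2 (mem_zpowers_zpow_iff.2 hcop.symm))

theorem pow_mem_of_card_eq_div {c : P} (hc : IsOfFinOrder c) {m : ℕ} (hm : m ∣ orderOf c)
    {H : Subgroup P} (hH : H ≤ zpowers c) (hcard : Nat.card H = orderOf c / m) : c ^ m ∈ H := by
  have hindex : (H.subgroupOf (zpowers c)).index = m := by
    have hpos : 0 < orderOf c / m :=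
      Nat.div_pos (Nat.le_of_dvd hc.orderOf_pos hm) (Nat.pos_of_dvd_of_pos hm hc.orderOf_pos)
    refine Nat.eq_of_mul_eq_mul_left hpos ?_
    rw [Nat.div_mul_cancel hm, ← hcard, ← Nat.card_congr (subgroupOfEquivOfLe hH).toEquiv,
      card_mul_index, Nat.card_zpowers]
  have hpow := pow_index_mem (H.subgroupOf (zpowers c)) ⟨c, mem_zpowers c⟩
  rwa [hindex, mem_subgroupOf] at hpow

theorem mem_of_zpowers_lt_of_card_eq_div (hp : p.Prime) (hP : IsPGroup p P) {a c : P}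
    (hac : zpowers a < zpowers c) {H : Subgroup P} (hH : H ≤ zpowers c)
    (hcard : Nat.card H = Nat.card (zpowers c) / p) : a ∈ H := by
  have := Fact.mk hp
  obtain ⟨k, rfl⟩ := mem_zpowers_iff.1 (zpowers_le.1 hac.le)
  obtain ⟨l, rfl⟩ := prime_dvd_of_zpowers_zpow_lt hp hP hac
  have hc : c ≠ 1 := by
    rintro rfl
    simp at hac
  have hcp : c ^ p ∈ H :=
    pow_mem_of_card_eq_div (hP.isOfFinOrder hp.ne_zero c) (hP.dvd_orderOf hc) hH
      (by rw [hcard, Nat.card_zpowers])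
  rw [zpow_mul, zpow_natCast]
  exact zpow_mem hcp l

theorem exists_lt_orderOf_of_lt_exponent (hp : p.Prime) (hP : IsPGroup p P)
    (hexp : p < Monoid.exponent P) : ∃ c : P, p < orderOf c := by
  have := Fact.mk hp
  by_contra! hle
  refine hexp.not_ge (Nat.le_of_dvd hp.pos (Monoid.exponent_dvd.2 fun c => ?_))
  obtain ⟨k, hk⟩ := IsPGroup.iff_orderOf.1 hP c
  have hk1 : k ≤ 1 :=
    (Nat.pow_le_pow_iff_right hp.one_lt).1 (by simpa only [hk, pow_one] using hle c)
  simpa only [hk, pow_one] using pow_dvd_pow p hk1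

theorem eq_one_of_zpowers_lt_of_exponent_eq (hp : p.Prime) (hP : IsPGroup p P)
    (hexp : Monoid.exponent P = p) {a c : P} (hac : zpowers a < zpowers c) : a = 1 := by
  have hdvd (b : P) : orderOf b ∣ p := hexp ▸ Monoid.order_dvd_exponent b
  have hlt : orderOf a < p :=
    (orderOf_lt_of_zpowers_lt (hP.isOfFinOrder hp.ne_zero c) hac).trans_le
      (Nat.le_of_dvd hp.pos (hdvd c))
  exact orderOf_eq_one_iff.1 (((Nat.dvd_prime hp).1 (hdvd a)).resolve_right hlt.ne)

theorem exists_maximal_orderOf_zpowers_lt (hexp : Monoid.ExponentExists P) {a : P}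
    (ha : ¬ IsMaxCyclic (zpowers a)) :
    ∃ c, zpowers a < zpowers c ∧ ∀ d, zpowers a < zpowers d → orderOf d ≤ orderOf c := by
  have hfin : (orderOf '' {c | zpowers a < zpowers c}).Finite :=
    (Set.finite_Iic (Monoid.exponent P)).subset
      (Set.image_subset_iff.2 fun c _ => Monoid.orderOf_le_exponent hexp c)
  obtain ⟨c, hac, hmax⟩ :=
    Set.Finite.exists_maximalFor' _ _ hfin (not_isMaxCyclic_zpowers_iff.1 ha)
  exact ⟨c, hac, fun d had => (le_total _ _).elim id (hmax had)⟩

theorem exists_zpowers_mem_sPrime_of_not_isMaxCyclic (hp : p.Prime) (hP : IsPGroup p P)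
    (hexp : p < Monoid.exponent P) {a : P} (ha : ¬ IsMaxCyclic (zpowers a)) :
    ∃ c, zpowers c ∈ SPrime p P ∧ zpowers a < zpowers c := by
  have := Fact.mk hp
  have hfin := hP.isOfFinOrder hp.ne_zero
  obtain ⟨c, hac, hmax⟩ :=
    exists_maximal_orderOf_zpowers_lt (Monoid.exponent_pos.1 (hp.pos.trans hexp)) ha
  have hac_lt := orderOf_lt_of_zpowers_lt (hfin c) hac
  have hpc : p < orderOf c := by
    by_cases ha1 : a = 1
    · obtain ⟨d, hd⟩ := exists_lt_orderOf_of_lt_exponent hp hP hexp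
      subst ha1
      exact hd.trans_le <| hmax d <| zpowers_lt_of_mem_of_orderOf_lt (one_mem _) <| by
        simpa only [orderOf_one] using hp.one_lt.trans hd
    · exact (Nat.le_of_dvd (hfin a).orderOf_pos (hP.dvd_orderOf ha1)).trans_lt hac_lt
  refine ⟨c, ⟨isMaxCyclic_zpowers_iff.2 fun d hcd => ?_, by rwa [Nat.card_zpowers], ?_⟩, hac⟩
  · have hle := zpowers_le.2 hcd
    exact zpowers_eq_of_le_of_orderOf_le (hfin d) hle (hmax d (hac.trans_le hle)) ▸ mem_zpowers d
  · rintro ⟨D, ⟨hD, -⟩, hcD, -, -, hinf⟩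
    obtain ⟨d, rfl⟩ := D.isCyclic_iff_exists_zpowers_eq_top.1 hD
    have had : a ∈ zpowers d :=
      (mem_of_zpowers_lt_of_card_eq_div hp hP hac inf_le_left hinf).2
    rw [Nat.card_zpowers, Nat.card_zpowers] at hcD
    exact hcD.not_ge (hmax d (zpowers_lt_of_mem_of_orderOf_lt had (hac_lt.trans hcD)))

theorem SubgroupDominated.card_eq {C D : Subgroup P} (h : SubgroupDominated p C D)
    (hC : C ∈ SPrime p P) (hD : IsMaxCyclic D) : Nat.card C = Nat.card D :=
  h.2.1.eq_of_not_lt fun hlt => hC.2.2 ⟨D, hD, hlt, h⟩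

theorem PhiEquiv.zpowers_lt (hp : p.Prime) (hP : IsPGroup p P) {a c d : P}
    (h : PhiEquiv p (zpowers c) (zpowers d)) (hc : zpowers c ∈ SPrime p P)
    (hd : zpowers d ∈ SPrime p P) (hac : zpowers a < zpowers c) : zpowers a < zpowers d := by
  have of_card_eq (hcard : Nat.card (zpowers c) = Nat.card (zpowers d))
      (hinf : Nat.card ↥(zpowers c ⊓ zpowers d) = Nat.card (zpowers c) / p) :
      zpowers a < zpowers d := by
    refine zpowers_lt_of_mem_of_orderOf_lt
      (mem_of_zpowers_lt_of_card_eq_div hp hP hac inf_le_left hinf).2 ?_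
    rw [← Nat.card_zpowers d, ← hcard, Nat.card_zpowers]
    exact orderOf_lt_of_zpowers_lt (hP.isOfFinOrder hp.ne_zero c) hac
  rcases h with heq | hcd | hdc
  · exact heq ▸ hac
  · exact of_card_eq (hcd.card_eq hc hd.1) hcd.2.2
  · have hcard := hdc.card_eq hd hc.1
    exact of_card_eq hcard.symm (by rw [inf_comm, hdc.2.2, hcard])

variable {F : Set P}

theorem IsAdmissibleF.nontrivial (hF : IsAdmissibleF p P F) (hp : p.Prime) : Nontrivial P := by
  have hexp : p ≤ Monoid.exponent P := hF.elim (fun h => h.1.ge) (fun h => h.1.le)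
  by_contra hP
  rw [Monoid.exp_eq_one_iff.2 (not_nontrivial_iff_subsingleton.1 hP)] at hexp
  exact hexp.not_gt hp.one_lt

theorem IsAdmissibleF.ne_one (hF : IsAdmissibleF p P F) (hp : p.Prime) {a : P} (ha : a ∈ F) :
    a ≠ 1 := by
  rintro rfl
  rcases hF with ⟨-, y, hy, rfl⟩ | ⟨-, hmem, -⟩
  · rw [← Set.mem_singleton_iff.1 ha, orderOf_one] at hy
    exact hp.one_lt.ne hy
  · have hcard := (hmem 1 ha).2.1
    rw [Nat.card_zpowers, orderOf_one] at hcard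
    exact hcard.not_gt hp.one_lt

theorem IsAdmissibleF.exists_zpowers_lt (hF : IsAdmissibleF p P F) (hp : p.Prime)
    (hP : IsPGroup p P) {a : P} (ha : ¬ IsMaxCyclic (zpowers a)) :
    ∃ y ∈ F, zpowers a < zpowers y := by
  have hne {y : P} (hy : y ∈ F) : y ≠ 1 := hF.ne_one hp hy
  rcases hF with ⟨hexp, y, -, rfl⟩ | ⟨hexp, hmem, hrep, -⟩
  · obtain ⟨c, hac⟩ := not_isMaxCyclic_zpowers_iff.1 ha
    obtain rfl := eq_one_of_zpowers_lt_of_exponent_eq hp hP hexp hac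
    exact ⟨y, rfl, zpowers_one_lt_zpowers (hne rfl)⟩
  · obtain ⟨c, hc, hac⟩ := exists_zpowers_mem_sPrime_of_not_isMaxCyclic hp hP hexp ha
    obtain ⟨y, hy, hcy⟩ := hrep _ hc
    exact ⟨y, hy, hcy.zpowers_lt hp hP hc (hmem y hy) hac⟩

end PGroup

section DiffAdj

variable {G : Type*} [Group G]

theorem diffAdj.symm {x y : G} (h : diffAdj x y) : diffAdj y x :=
  ⟨Set.pair_comm x y ▸ h.1, h.2.2, h.2.1⟩

theorem diffAdj.ne {x y : G} (h : diffAdj x y) : x ≠ y := by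
  rintro rfl
  exact h.2.1 ⟨1, (zpow_one x).symm⟩

theorem diffAdj.left_ne_one {x y : G} (h : diffAdj x y) : x ≠ 1 := by
  rintro rfl
  exact h.2.2 ⟨0, (zpow_zero y).symm⟩

theorem diffAdj.not_isMaxCyclic_left {x y : G} (h : diffAdj x y) :
    ¬ IsMaxCyclic (zpowers x) := by
  intro hmax
  have hle : zpowers x ≤ closure {x, y} := zpowers_le.2 (subset_closure (Set.mem_insert x {y}))
  have hy : y ∈ zpowers x :=
    hmax.2 _ h.1 hle ▸ subset_closure (Set.mem_insert_of_mem x (Set.mem_singleton y))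
  obtain ⟨k, hk⟩ := mem_zpowers_iff.1 hy
  exact h.2.1 ⟨k, hk.symm⟩

theorem isDominatingSet_diffGraph {S : Set G}
    (h : ∀ g y : G, diffAdj g y → ∃ u ∈ S, diffAdj u g) :
    IsDominatingSet (diffGraph G) {v | v.val ∈ S} := by
  rintro ⟨g, y, hgy⟩
  obtain ⟨u, hu, hug⟩ := h g y hgy
  refine Or.inr ⟨⟨u, g, hug⟩, hu, ?_⟩
  rw [diffGraph, SimpleGraph.fromRel_adj]
  exact ⟨Subtype.coe_ne_coe.1 hug.ne, Or.inl hug⟩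

theorem left_mem_zpowers_mul_of_coprime {u b : G} (hub : Commute u b)
    (hco : (orderOf u).Coprime (orderOf b)) : u ∈ zpowers (u * b) := by
  obtain ⟨m, hm⟩ := exists_pow_eq_self_of_coprime hco.symm
  refine mem_zpowers_iff.2 ⟨(orderOf b * m : ℕ), ?_⟩
  rw [zpow_natCast, pow_mul, hub.mul_pow, pow_orderOf_eq_one, mul_one, hm]

theorem isCyclic_closure_pair_mul_of_coprime {u a b : G} (hub : Commute u b)
    (hco : (orderOf u).Coprime (orderOf b)) (ha : a ∈ zpowers u) :
    IsCyclic (closure {u, a * b}) := by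
  have hu := left_mem_zpowers_mul_of_coprime hub hco
  have hb : b ∈ zpowers (u * b) := hub.eq ▸ left_mem_zpowers_mul_of_coprime hub.symm hco.symm
  exact isCyclic_of_le
    ((closure_le (zpowers (u * b))).2 (Set.pair_subset hu (mul_mem (zpowers_le.2 hu ha) hb)))

theorem diffAdj_mul_of_coprime {u a b : G} (hub : Commute u b)
    (hco : (orderOf u).Coprime (orderOf b)) (hau : zpowers a < zpowers u) (hb : b ≠ 1) :
    diffAdj u (a * b) := by
  have ha : a ∈ zpowers u := zpowers_le.1 hau.le
  have hdisj : Disjoint (zpowers u) (zpowers b) :=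
    disjoint_of_coprime_natCard (by simpa only [Nat.card_zpowers] using hco)
  refine ⟨isCyclic_closure_pair_mul_of_coprime hub hco ha, ?_, ?_⟩
  · rintro ⟨k, hk⟩
    have hbu : b ∈ zpowers u :=
      ((zpowers u).mul_mem_cancel_left ha).1 (hk ▸ zpow_mem_zpowers u k)
    exact hb (disjoint_def.1 hdisj hbu (mem_zpowers b))
  · rintro ⟨k, hk⟩
    obtain ⟨l, rfl⟩ := mem_zpowers_iff.1 ha
    rw [(hub.zpow_left l).mul_zpow] at hk
    have hbu : b ^ k ∈ zpowers u :=
      ((zpowers u).mul_mem_cancel_left (zpow_mem ha k)).1 (hk ▸ mem_zpowers u)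
    rw [disjoint_def.1 hdisj hbu (zpow_mem_zpowers b k), mul_one] at hk
    exact hau.not_ge (zpowers_le.2 (mem_zpowers_iff.2 ⟨k, hk.symm⟩))

theorem diffAdj_map_mul_of_coprime {H : Type*} [Group H] {φ : H →* G}
    (hφ : Function.Injective φ) {u a : H} {b : G} (hub : Commute (φ u) b)
    (hco : (orderOf u).Coprime (orderOf b)) (hau : zpowers a < zpowers u) (hb : b ≠ 1) :
    diffAdj (φ u) (φ a * b) := by
  refine diffAdj_mul_of_coprime hub (by rwa [orderOf_injective φ hφ]) ?_ hb
  rwa [← MonoidHom.map_zpowers, ← MonoidHom.map_zpowers, map_lt_map_iff_of_injective hφ]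

end DiffAdj

section Product

theorem diffAdj_one_prodMk {G Z : Type*} [Group G] [Group Z] {f : G} {x z : Z}
    (hzx : zpowers z < zpowers x) (hf : f ≠ 1) (hco : (orderOf x).Coprime (orderOf f)) :
    diffAdj ((1, x) : G × Z) (f, z) := by
  have hmul : (f, z) = MonoidHom.inr G Z z * (f, 1) := by simp
  have hcomm : Commute (MonoidHom.inr G Z x) (f, 1) := .prod (.one_left f) (.one_right x)
  have hco' : (orderOf x).Coprime (orderOf ((f, 1) : G × Z)) :=
    coprime_orderOf_prodMk hco (by simp)
  rw [hmul]
  exact diffAdj_map_mul_of_coprime (φ := MonoidHom.inr G Z) (Prod.mk_right_injective 1) hcomm hco'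
    hzx (by simpa [Prod.ext_iff] using hf)

variable {ι : Type*} {P : ι → Type*} [∀ i, Group (P i)] {Z : Type*} [Group Z]

theorem exists_ne_one_apply_eq_one [∀ i, Nontrivial (P i)] (h : Nontrivial Z ∨ Nontrivial ι)
    (i : ι) : ∃ (f : ∀ i, P i) (z : Z), f i = 1 ∧ (f, z) ≠ 1 := by
  classical
  rcases h with h | h
  · obtain ⟨z, hz⟩ := exists_ne (1 : Z)
    exact ⟨1, z, rfl, by simpa [Prod.ext_iff] using hz⟩
  · obtain ⟨j, hji⟩ := exists_ne i
    obtain ⟨b, hb⟩ := exists_ne (1 : P j)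
    exact ⟨Pi.mulSingle j b, 1, Pi.mulSingle_eq_of_ne hji.symm b, by simpa [Prod.ext_iff] using hb⟩

variable [DecidableEq ι]

theorem diffAdj_mulSingle_one [Finite ι] {i : ι} {a : P i} {f : ∀ i, P i} {z : Z}
    (hfa : zpowers (f i) < zpowers a) (hne : (Function.update f i 1, z) ≠ 1)
    (hco : ∀ j ≠ i, (orderOf a).Coprime (orderOf (f j)))
    (hcoz : (orderOf a).Coprime (orderOf z)) :
    diffAdj ((Pi.mulSingle i a, 1) : (∀ i, P i) × Z) (f, z) := by
  let φ : P i →* (∀ i, P i) × Z := (MonoidHom.inl _ Z).comp (MonoidHom.mulSingle P i)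
  have hφ : Function.Injective φ :=
    (Prod.mk_left_injective 1).comp (Pi.mulSingle_injective i)
  have hmul : (f, z) = φ (f i) * (Function.update f i 1, z) := by
    refine Prod.ext (funext fun j => ?_) (one_mul z).symm
    by_cases hj : j = i
    · subst hj
      simp [φ]
    · simp [φ, hj]
  have hcomm : Commute (φ a) (Function.update f i 1, z) := by
    refine .prod (Pi.commute_iff.2 fun j => ?_) (.one_left z)
    by_cases hj : j = i
    · subst hj
      simp [φ]
    · simp [φ, hj]
  have hco' : (orderOf a).Coprime (orderOf (Function.update f i 1, z)) := by
    refine coprime_orderOf_prodMk (coprime_orderOf_pi fun j => ?_) hcoz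
    by_cases hj : j = i
    · subst hj
      simp
    · simpa only [Function.update_of_ne hj] using hco j hj
  rw [hmul]
  exact diffAdj_map_mul_of_coprime hφ hcomm hco' hfa hne

theorem exists_component_not_isMaxCyclic [Finite ι] [Nonempty ι] [∀ i, Nontrivial (P i)]
    (h : Nontrivial Z ∨ Nontrivial ι) {f : ∀ i, P i} {z : Z}
    (hmax : ¬ IsMaxCyclic (zpowers (f, z))) (hne : (f, z) ≠ 1) :
    (∃ i, ¬ IsMaxCyclic (zpowers (f i)) ∧ (Function.update f i 1, z) ≠ 1) ∨
      ¬ IsMaxCyclic (zpowers z) ∧ f ≠ 1 := by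
  rcases eq_or_ne f 1 with rfl | hf
  · obtain ⟨i⟩ := ‹Nonempty ι›
    exact Or.inl ⟨i, not_isMaxCyclic_zpowers_one, by simpa [Prod.ext_iff] using hne⟩
  by_cases hz : IsMaxCyclic (zpowers z)
  swap
  · exact Or.inr ⟨hz, hf⟩
  obtain ⟨i, hi⟩ : ∃ i, ¬ IsMaxCyclic (zpowers (f i)) := by
    by_contra! hmax_pi
    exact hmax (isMaxCyclic_zpowers_prodMk (isMaxCyclic_zpowers_pi hmax_pi) hz)
  by_cases hi_ne : (Function.update f i 1, z) ≠ 1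
  · exact Or.inl ⟨i, hi, hi_ne⟩
  obtain ⟨hf_one, rfl⟩ := Prod.mk.inj (not_not.1 hi_ne)
  obtain ⟨j, hji⟩ : ∃ j, j ≠ i := by
    have hι : Nontrivial ι := h.resolve_left fun _ => not_isMaxCyclic_zpowers_one hz
    exact exists_ne i
  obtain ⟨-, hf_off⟩ := Function.update_eq_iff.1 hf_one
  refine Or.inl ⟨j, ?_, fun hj => hf ?_⟩
  · rw [hf_off j hji]
    exact not_isMaxCyclic_zpowers_one
  · obtain ⟨-, hf_off'⟩ := Function.update_eq_iff.1 (Prod.mk.inj hj).1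
    refine funext fun k => ?_
    rcases eq_or_ne k i with rfl | hki
    exacts [hf_off' k hji.symm, hf_off k hki]

/-- The set `ℱ(G)` attached to `G = (∏ i, P i) × Z`, where `F i` is an admissible set `ℱ(P i)` and
`x` generates the cyclic factor `Z`. The condition `x ≠ 1` says that `Z` is not trivial. -/
def productF (F : ∀ i, Set (P i)) (x : Z) : Set ((∀ i, P i) × Z) :=
  {g | (∃ i, ∃ a ∈ F i, g = (Pi.mulSingle i a, 1)) ∨ (x ≠ 1 ∧ g = (1, x))}

theorem exists_diffAdj_of_mem_productF [Finite ι] [Nonempty ι] [∀ i, Nontrivial (P i)]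
    (h : Nontrivial Z ∨ Nontrivial ι)
    (hco : ∀ i j, i ≠ j → ∀ (a : P i) (b : P j), (orderOf a).Coprime (orderOf b))
    (hcoz : ∀ i (a : P i) (z : Z), (orderOf a).Coprime (orderOf z))
    {F : ∀ i, Set (P i)} (hF : ∀ i, 1 ∉ F i) {x : Z} {g : (∀ i, P i) × Z}
    (hg : g ∈ productF F x) : ∃ y, diffAdj g y := by
  rcases hg with ⟨i, a, ha, rfl⟩ | ⟨hx, rfl⟩
  · obtain ⟨f, z, hfi, hne⟩ := exists_ne_one_apply_eq_one (P := P) h i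
    refine ⟨(f, z), diffAdj_mulSingle_one ?_ ?_ (fun j hj => hco i j hj.symm a (f j)) (hcoz i a z)⟩
    · exact hfi ▸ zpowers_one_lt_zpowers (ne_of_mem_of_not_mem ha (hF i))
    · rwa [← hfi, Function.update_eq_self]
  · have hP : Nontrivial (∀ i, P i) := Pi.nontrivial_at (Classical.arbitrary ι)
    obtain ⟨f, hf⟩ := exists_ne (1 : ∀ i, P i)
    exact ⟨(f, 1), diffAdj_one_prodMk (zpowers_one_lt_zpowers hx) hf
      (coprime_orderOf_pi fun i => (hcoz i (f i) x).symm)⟩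

theorem exists_mem_productF_diffAdj [Finite ι] [Nonempty ι] [∀ i, Nontrivial (P i)]
    (h : Nontrivial Z ∨ Nontrivial ι)
    (hco : ∀ i j, i ≠ j → ∀ (a : P i) (b : P j), (orderOf a).Coprime (orderOf b))
    (hcoz : ∀ i (a : P i) (z : Z), (orderOf a).Coprime (orderOf z))
    {F : ∀ i, Set (P i)}
    (hF : ∀ i (a : P i), ¬ IsMaxCyclic (zpowers a) → ∃ y ∈ F i, zpowers a < zpowers y)
    {x : Z} (hx : zpowers x = ⊤) {g y : (∀ i, P i) × Z} (hgy : diffAdj g y) :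
    ∃ u ∈ productF F x, diffAdj u g := by
  obtain ⟨f, z⟩ := g
  rcases exists_component_not_isMaxCyclic h hgy.not_isMaxCyclic_left hgy.left_ne_one with
    ⟨i, hi, hne⟩ | ⟨hz, hf⟩
  · obtain ⟨a, ha, hfa⟩ := hF i (f i) hi
    exact ⟨(Pi.mulSingle i a, 1), Or.inl ⟨i, a, ha, rfl⟩,
      diffAdj_mulSingle_one hfa hne (fun j hj => hco i j hj.symm a (f j)) (hcoz i a z)⟩
  · obtain ⟨c, hzc⟩ := not_isMaxCyclic_zpowers_iff.1 hz
    have hzx : zpowers z < zpowers x := hzc.trans_le (hx ▸ le_top)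
    have hx1 : x ≠ 1 := by
      rintro rfl
      simp at hzx
    exact ⟨(1, x), Or.inr ⟨hx1, rfl⟩,
      diffAdj_one_prodMk hzx hf (coprime_orderOf_pi fun i => (hcoz i (f i) x).symm)⟩

end Product

theorem diffGraph_dominating_set_of_nilpotent_general {ι : Type*} [Finite ι] [DecidableEq ι]
    [Nonempty ι] {P : ι → Type*} [∀ i, Group (P i)] {Z : Type*} [Group Z]
    (h : Nontrivial Z ∨ Nontrivial ι) {p : ι → ℕ} (hp : ∀ i, (p i).Prime)
    (hinj : Function.Injective p) (hPp : ∀ i, IsPGroup (p i) (P i))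
    (hpZ : ∀ i, ¬ p i ∣ Nat.card Z) {F : ∀ i, Set (P i)}
    (hF : ∀ i, IsAdmissibleF (p i) (P i) (F i)) {x : Z} (hx : zpowers x = ⊤) :
    (∀ g ∈ productF F x, ∃ y, diffAdj g y) ∧
      IsDominatingSet (diffGraph ((∀ i, P i) × Z)) {v | v.val ∈ productF F x} := by
  have hnt (i : ι) : Nontrivial (P i) := (hF i).nontrivial (hp i)
  have hco (i j : ι) (hij : i ≠ j) : ∀ (a : P i) (b : P j), (orderOf a).Coprime (orderOf b) :=
    coprime_orderOf_of_isPGroup (hPp i) (hPp j)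
      ((Nat.coprime_primes (hp i) (hp j)).2 (hinj.ne hij))
  have hcoz (i : ι) (a : P i) (z : Z) : (orderOf a).Coprime (orderOf z) :=
    ((hPp i).orderOf_coprime ((hp i).coprime_iff_not_dvd.2 (hpZ i)) a).coprime_dvd_right
      (orderOf_dvd_natCard z)
  exact ⟨fun g hg => exists_diffAdj_of_mem_productF h hco hcoz
      (fun i hi => (hF i).ne_one (hp i) hi rfl) hg,
    isDominatingSet_diffGraph fun g y hgy => exists_mem_productF_diffAdj h hco hcoz
      (fun i a ha => (hF i).exists_zpowers_lt (hp i) (hPp i) ha) hx hgy⟩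

/-- Lemma 5.4: let `G = P₁ × ⋯ × P_t × ℤ_n` be a non-cyclic nilpotent group which is not
a `p`-group, where the `P_i` are the non-cyclic Sylow `p_i`-subgroups of `G`, the primes
`p_i` are pairwise distinct and do not divide `n` (with `t ≥ 2` if `n = 1`). Then for
every admissible choice of the sets `ℱ(P_i)` and every generator `x` of `ℤ_n`, the set
`ℱ(G)`, consisting of the (embedded) elements of the `ℱ(P_i)` together with `x` in the
case `n > 1`, is a dominating set of the difference graph `𝒟(G)`. -/
theorem diffGraph_dominating_set_of_nilpotent
    (t n : ℕ) (hn : 0 < n) (ht : 0 < t) (htn : n = 1 → 2 ≤ t)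
    (P : Fin t → Type u) [inst : ∀ i, Group (P i)] [∀ i, Finite (P i)]
    (p : Fin t → ℕ) (hp : ∀ i, (p i).Prime) (hinj : Function.Injective p)
    (hPp : ∀ i, IsPGroup (p i) (P i)) (hnc : ∀ i, ¬ IsCyclic (P i))
    (hpn : ∀ i, ¬ p i ∣ n)
    (F : ∀ i, Set (P i)) (hF : ∀ i, IsAdmissibleF (p i) (P i) (F i))
    (x : Multiplicative (ZMod n)) (hx : Subgroup.zpowers x = ⊤) :
    (∀ g ∈ ({g : (∀ i, P i) × Multiplicative (ZMod n) |
        (∃ i, ∃ a ∈ F i, g = (Pi.mulSingle i a, 1)) ∨ (1 < n ∧ g = (1, x))} :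
          Set ((∀ i, P i) × Multiplicative (ZMod n))),
      ∃ y, diffAdj g y) ∧
    IsDominatingSet (diffGraph ((∀ i, P i) × Multiplicative (ZMod n)))
      {v : DiffVertex ((∀ i, P i) × Multiplicative (ZMod n)) |
        (∃ i, ∃ a ∈ F i, v.val = (Pi.mulSingle i a, 1)) ∨ (1 < n ∧ v.val = (1, x))} := by
  have : Nonempty (Fin t) := ⟨⟨0, ht⟩⟩
  have hcard : Nat.card (Multiplicative (ZMod n)) = n := Nat.card_zmod n
  have hx_ne : x ≠ 1 ↔ 1 < n := by
    rw [← orderOf_eq_one_iff.ne, orderOf_eq_card_of_zpowers_eq_top hx, hcard]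
    lia
  have hnt : Nontrivial (Multiplicative (ZMod n)) ∨ Nontrivial (Fin t) :=
    (Nat.succ_le_iff.2 hn).lt_or_eq'.imp (fun h => nontrivial_of_ne x 1 (hx_ne.2 h))
      fun h => Fin.nontrivial_iff_two_le.2 (htn h)
  simpa only [productF, hx_ne, Set.mem_ofPred_eq] using
    diffGraph_dominating_set_of_nilpotent_general hnt hp hinj hPp (hcard.symm ▸ hpn) hF hx
end
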